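/- Let m ≥ 1 be an integer. There exists a constant C = C(m) such that for every continuously differentiable ε : (0,∞) → ℂ with ‖ε‖_{L²} < ∞ and ‖ε‖_{Ḣ¹_m} < ∞, one has the Hardy-type estimate ( 2π·∫₀^∞ (2·A_θ[Q,ε](r)/r)²·|ε(r)|²·r dr )^{1/2} ≤ C·‖ε‖_{Ḣ¹_m}^{3/2}·‖ε‖_{L²}^{1/2}. -/

import Mathlib

open MeasureTheory Set Filter

noncomputable section

/-- The Jackiw–Pi vortex `Q(r) = √8 (m+1) r^m / (1 + r^(2m+2))`. -/
def Q (m : ℕ) (r : ℝ) : ℝ :=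
  Real.sqrt 8 * (m + 1) * r ^ m / (1 + r ^ (2 * m + 2))

/-- `A_θ[u](r) = -(1/2) ∫₀^r |u(r')|² r' dr'`. -/
def Atheta (u : ℝ → ℂ) (r : ℝ) : ℝ :=
  -(1 / 2) * ∫ s in (0:ℝ)..r, ‖u s‖ ^ 2 * s

/-- Bilinear version `A_θ[f,g](r) = -(1/2) ∫₀^r Re(conj f g) r' dr'`. -/
def Atheta2 (f g : ℝ → ℂ) (r : ℝ) : ℝ :=
  -(1 / 2) * ∫ s in (0:ℝ)..r, ((starRingEnd ℂ) (f s) * g s).re * s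

/-- `A_t[u](r) = -∫_r^∞ (m + A_θ[u](r')) |u(r')|² / r' dr'`. -/
def At (m : ℕ) (u : ℝ → ℂ) (r : ℝ) : ℝ :=
  -∫ s in Set.Ioi r, ((m : ℝ) + Atheta u s) * ‖u s‖ ^ 2 / s

/-- Squared (2D radial) `L²` norm: `‖u‖² = 2π ∫₀^∞ |u(r)|² r dr`. -/
def L2sq (u : ℝ → ℂ) : ℝ :=
  2 * Real.pi * ∫ r in Set.Ioi (0:ℝ), ‖u r‖ ^ 2 * r

/-- Squared equivariant `Ḣ¹_m` norm. -/
def H1msq (m : ℕ) (u : ℝ → ℂ) : ℝ :=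
  2 * Real.pi * ∫ r in Set.Ioi (0:ℝ), (‖deriv u r‖ ^ 2 + (m : ℝ) ^ 2 * ‖u r‖ ^ 2 / r ^ 2) * r

/-- The energy functional. -/
def Energy (m : ℕ) (u : ℝ → ℂ) : ℝ :=
  2 * Real.pi * ∫ r in Set.Ioi (0:ℝ),
    ((1 / 2) * ‖deriv u r‖ ^ 2
      + (1 / 2) * (((m : ℝ) + Atheta u r) / r) ^ 2 * ‖u r‖ ^ 2
      - (1 / 4) * ‖u r‖ ^ 4) * r

/-- The Chern–Simons–Schrödinger equation at the point `(t, r)`: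
`i ∂_t u - A_t[u] u + ∂_r² u + (1/r) ∂_r u - ((m + A_θ[u])/r)² u + |u|² u = 0`. -/
def CSSeq (m : ℕ) (u : ℝ → ℝ → ℂ) (t r : ℝ) : Prop :=
  Complex.I * deriv (fun s => u s r) t
    - (At m (u t) r : ℂ) * u t r
    + deriv (deriv (u t)) r
    + (1 / (r : ℂ)) * deriv (u t) r
    - ((((m : ℝ) + Atheta (u t) r) / r : ℝ) : ℂ) ^ 2 * u t r
    + ((‖u t r‖ : ℝ) : ℂ) ^ 2 * u t r = 0

/-- A classical `m`-equivariant solution of CSS on the open interval `I`. -/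
structure IsCSS (m : ℕ) (I : Set ℝ) (u : ℝ → ℝ → ℂ) : Prop where
  smooth : ContDiffOn ℝ (⊤ : ℕ∞) (fun p : ℝ × ℝ => u p.1 p.2) (I ×ˢ Set.Ioi (0:ℝ))
  integrable : ∀ t ∈ I, IntegrableOn (fun r => ‖u t r‖ ^ 2 * r) (Set.Ioi (0:ℝ))
  equivariant : ∃ U : ℝ → ℝ × ℝ → ℂ,
    ContDiffOn ℝ (⊤ : ℕ∞) (fun p : ℝ × (ℝ × ℝ) => U p.1 p.2) (I ×ˢ (Set.univ : Set (ℝ × ℝ))) ∧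
    ∀ t ∈ I, ∀ x : ℝ × ℝ, x ≠ 0 →
      U t x = u t (Real.sqrt (x.1 ^ 2 + x.2 ^ 2)) *
        (((x.1 : ℂ) + (x.2 : ℂ) * Complex.I) / ((Real.sqrt (x.1 ^ 2 + x.2 ^ 2) : ℝ) : ℂ)) ^ m
  bounded : ∀ J : Set ℝ, J ⊆ I → IsCompact J → ∃ C : ℝ, ∀ t ∈ J,
    Real.sqrt (L2sq (u t)) + Real.sqrt (H1msq m (u t)) ≤ C
  eq : ∀ t ∈ I, ∀ r : ℝ, 0 < r → CSSeq m u t r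

/-- Tightness: uniformly small mass near spatial infinity. -/
def Tight (I : Set ℝ) (u : ℝ → ℝ → ℂ) : Prop :=
  ∀ η : ℝ, 0 < η → ∃ R : ℝ, ∀ t ∈ I,
    2 * Real.pi * ∫ r in Set.Ioi R, ‖u t r‖ ^ 2 * r < η

/-- The real inner product `(f,g)_r = Re (2π ∫₀^∞ f conj(g) r dr)`. -/
def iprod (f g : ℝ → ℂ) : ℝ :=
  2 * Real.pi * (∫ r in Set.Ioi (0:ℝ), f r * (starRingEnd ℂ) (g r) * (r : ℂ)).re

/-- `ΛQ = r Q' + Q`. -/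
def LamQ (m : ℕ) (r : ℝ) : ℝ := r * deriv (Q m) r + Q m r

/-- The linearized Bogomol'nyi operator `L_Q`. -/
def LQ (m : ℕ) (f : ℝ → ℂ) (r : ℝ) : ℂ :=
  deriv f r - ((((m : ℝ) + Atheta (fun s => (Q m s : ℂ)) r) / r : ℝ) : ℂ) * f r
    - ((2 * Atheta2 (fun s => (Q m s : ℂ)) f r / r : ℝ) : ℂ) * (Q m r : ℂ)

end

theorem cs_aux {μ : Measure ℝ} {f g : ℝ → ℝ} (hf : AEStronglyMeasurable f μ)
    (hg : AEStronglyMeasurable g μ) (hf2 : Integrable (fun x => f x ^ 2) μ)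
    (hg2 : Integrable (fun x => g x ^ 2) μ) (hf0 : 0 ≤ᵐ[μ] f) (hg0 : 0 ≤ᵐ[μ] g) :
    (∫ x, f x * g x ∂μ) ≤ Real.sqrt (∫ x, f x ^ 2 ∂μ) * Real.sqrt (∫ x, g x ^ 2 ∂μ) := by
  have hfl : MemLp f (ENNReal.ofReal 2) μ := by
    have := (memLp_two_iff_integrable_sq hf).2 hf2
    simpa using this
  have hgl : MemLp g (ENNReal.ofReal 2) μ := by
    have := (memLp_two_iff_integrable_sq hg).2 hg2
    simpa using this
  have h := integral_mul_le_Lp_mul_Lq_of_nonneg (p := 2) (q := 2) Real.HolderConjugate.two_two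
    hf0 hg0 hfl hgl
  rw [Real.sqrt_eq_rpow, Real.sqrt_eq_rpow]
  simpa using h

theorem Q_nonneg_aux (m : ℕ) {s : ℝ} (hs : 0 < s) : 0 ≤ Q m s := by
  unfold Q; positivity

theorem Q_cont_aux (m : ℕ) : Continuous (Q m) := by
  unfold Q
  refine Continuous.div (by fun_prop) (by fun_prop) ?_
  intro x
  have : 0 ≤ x ^ (2 * m + 2) := Even.pow_nonneg ⟨m + 1, by ring⟩ x
  positivity

theorem Q_int_aux (m : ℕ) :
    Integrable (fun s => (Q m s * s) ^ 2) (volume.restrict (Ioi (0:ℝ))) := by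
  have h0 : Integrable (fun s : ℝ => (16 * ((m:ℝ) + 1) ^ 2) * (1 + s ^ 2)⁻¹)
      (volume.restrict (Ioi (0:ℝ))) :=
    (integrable_inv_one_add_sq.const_mul _).integrableOn
  refine h0.mono' (((Q_cont_aux m).mul continuous_id).pow 2).aestronglyMeasurable ?_
  filter_upwards [ae_restrict_mem measurableSet_Ioi] with s hs
  have hs : 0 < s := hs
  rw [Real.norm_of_nonneg (by positivity)]
  have hp : 0 < s ^ (2 * m + 2) := by positivity
  have h1 : (1 + s ^ 2) ≤ 2 * (1 + s ^ (2 * m + 2)) := by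
    rcases le_total s 1 with h | h
    · nlinarith
    · have : s ^ 2 ≤ s ^ (2 * m + 2) := pow_le_pow_right₀ h (by omega)
      nlinarith
  have e : (Q m s * s) ^ 2 = 8 * ((m:ℝ) + 1) ^ 2 * (s ^ (2 * m + 2) / (1 + s ^ (2 * m + 2)) ^ 2) := by
    unfold Q
    have h8 : Real.sqrt 8 ^ 2 = 8 := Real.sq_sqrt (by norm_num)
    have e2 : (Real.sqrt 8 * ((m:ℝ) + 1) * s ^ m / (1 + s ^ (2 * m + 2)) * s) ^ 2
      = Real.sqrt 8 ^ 2 * ((m:ℝ) + 1) ^ 2 * (s ^ (2 * m + 2) / (1 + s ^ (2 * m + 2)) ^ 2) := by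
      rw [div_mul_eq_mul_div, div_pow, ← mul_div_assoc]
      congr 1
      ring
    rw [e2, h8]
  rw [e]
  have h3 : s ^ (2 * m + 2) / (1 + s ^ (2 * m + 2)) ^ 2 ≤ 2 * (1 + s ^ 2)⁻¹ := by
    rw [← div_eq_mul_inv, div_le_div_iff₀ (by positivity) (by positivity)]
    nlinarith
  have : 0 ≤ 8 * ((m:ℝ) + 1) ^ 2 := by positivity
  nlinarith

/-- Hardy-type estimate
`‖(2 A_θ[Q,ε]/r) ε‖_{L²} ≤ C ‖ε‖_{Ḣ¹_m}^{3/2} ‖ε‖_{L²}^{1/2}`. -/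
theorem stmt16 (m : ℕ) (hm : 1 ≤ m) :
    ∃ C : ℝ,
    ∀ ε : ℝ → ℂ, ContDiffOn ℝ 1 ε (Set.Ioi 0) →
      IntegrableOn (fun r => ‖ε r‖ ^ 2 * r) (Set.Ioi (0:ℝ)) →
      IntegrableOn (fun r => (‖deriv ε r‖ ^ 2 + (m : ℝ) ^ 2 * ‖ε r‖ ^ 2 / r ^ 2) * r)
        (Set.Ioi (0:ℝ)) →
      Real.sqrt (2 * Real.pi * ∫ r in Set.Ioi (0:ℝ),
          (2 * Atheta2 (fun s => (Q m s : ℂ)) ε r / r) ^ 2 * ‖ε r‖ ^ 2 * r)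
        ≤ C * Real.sqrt (H1msq m ε) ^ ((3 : ℝ) / 2) * Real.sqrt (L2sq ε) ^ ((1 : ℝ) / 2) := by
  set μ := volume.restrict (Ioi (0:ℝ)) with hμ
  set K := ∫ s, (Q m s * s) ^ 2 ∂μ with hK
  have hK0 : 0 ≤ K := integral_nonneg fun s => by positivity
  refine ⟨Real.sqrt (2 * Real.pi * K), ?_⟩
  intro ε hε hL hH
  have hcont : ContinuousOn ε (Ioi 0) := hε.continuousOn
  have hmeas : AEStronglyMeasurable ε μ := hcont.aestronglyMeasurable measurableSet_Ioi
  have hnm : AEStronglyMeasurable (fun r => ‖ε r‖) μ := hmeas.norm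
  have hpos : ∀ᵐ r ∂μ, 0 < r := ae_restrict_mem measurableSet_Ioi
  have hm1 : (1:ℝ) ≤ (m:ℝ) ^ 2 := by
    have : (1:ℝ) ≤ m := by exact_mod_cast hm
    nlinarith
  have hptA : ∀ r : ℝ, 0 < r → ‖ε r‖ ^ 2 / r
      ≤ (‖deriv ε r‖ ^ 2 + (m : ℝ) ^ 2 * ‖ε r‖ ^ 2 / r ^ 2) * r := by
    intro r hr
    have e : (‖deriv ε r‖ ^ 2 + (m : ℝ) ^ 2 * ‖ε r‖ ^ 2 / r ^ 2) * r
      = ‖deriv ε r‖ ^ 2 * r + (m : ℝ) ^ 2 * (‖ε r‖ ^ 2 / r) := by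
      field_simp
    rw [e]
    have h1 : 0 ≤ ‖ε r‖ ^ 2 / r := by positivity
    have h2 : 0 ≤ ‖deriv ε r‖ ^ 2 * r := by positivity
    nlinarith
  have hminv : AEStronglyMeasurable (fun r : ℝ => r⁻¹) μ := measurable_inv.aestronglyMeasurable
  have hA : Integrable (fun r => ‖ε r‖ ^ 2 / r) μ := by
    refine Integrable.mono' hH ?_ ?_
    · simp only [div_eq_mul_inv]
      exact (hnm.pow 2).mul hminv
    · filter_upwards [hpos] with r hr
      rw [Real.norm_of_nonneg (by positivity)]
      exact hptA r hr
  set a := ∫ r, ‖ε r‖ ^ 2 / r ∂μ with ha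
  set b := ∫ r, ‖ε r‖ ^ 2 * r ∂μ with hb
  have ha0 : 0 ≤ a := integral_nonneg_of_ae (by
    filter_upwards [hpos] with r hr
    simp only [Pi.zero_apply]; positivity)
  have hb0 : 0 ≤ b := integral_nonneg_of_ae (by
    filter_upwards [hpos] with r hr
    simp only [Pi.zero_apply]; positivity)
  have hG : Integrable (fun r => ‖ε r‖ ^ 2) μ := by
    refine Integrable.mono' (hA.add hL) (hnm.pow 2) ?_
    filter_upwards [hpos] with r hr
    rw [Real.norm_of_nonneg (by positivity)]
    have h2 : 1 ≤ 1 / r + r := by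
      rw [div_add' _ _ _ hr.ne', le_div_iff₀ hr]
      nlinarith [sq_nonneg (r - 1)]
    have : ‖ε r‖ ^ 2 * 1 ≤ ‖ε r‖ ^ 2 * (1 / r + r) := by gcongr
    simp only [Pi.add_apply]
    calc _ = ‖ε r‖ ^ 2 * 1 := by ring
      _ ≤ _ := this
      _ = _ := by ring
  set G := ∫ r, ‖ε r‖ ^ 2 ∂μ with hGd
  have hG0 : 0 ≤ G := integral_nonneg fun s => by positivity
  have hsm : AEStronglyMeasurable (fun r : ℝ => Real.sqrt r) μ :=
    Real.continuous_sqrt.aestronglyMeasurable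
  have hsmi : AEStronglyMeasurable (fun r : ℝ => (Real.sqrt r)⁻¹) μ :=
    Real.continuous_sqrt.measurable.inv.aestronglyMeasurable
  have e1 : (fun r => (‖ε r‖ * (Real.sqrt r)⁻¹) ^ 2) =ᵐ[μ] fun r => ‖ε r‖ ^ 2 / r := by
    filter_upwards [hpos] with r hr
    rw [mul_pow, inv_pow, Real.sq_sqrt hr.le, div_eq_mul_inv]
  have e2 : (fun r => (‖ε r‖ * Real.sqrt r) ^ 2) =ᵐ[μ] fun r => ‖ε r‖ ^ 2 * r := by
    filter_upwards [hpos] with r hr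
    rw [mul_pow, Real.sq_sqrt hr.le]
  have e3 : (fun r => (‖ε r‖ * (Real.sqrt r)⁻¹) * (‖ε r‖ * Real.sqrt r))
      =ᵐ[μ] fun r => ‖ε r‖ ^ 2 := by
    filter_upwards [hpos] with r hr
    have : Real.sqrt r ≠ 0 := (Real.sqrt_pos.2 hr).ne'
    field_simp
  have hGab : G ≤ Real.sqrt a * Real.sqrt b := by
    have h := cs_aux (μ := μ) (hnm.mul hsmi) (hnm.mul hsm) (hA.congr e1.symm)
      (Integrable.congr hL e2.symm)
      (Eventually.of_forall fun r => by simp only [Pi.zero_apply, Pi.mul_apply]; positivity)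
      (Eventually.of_forall fun r => by simp only [Pi.zero_apply, Pi.mul_apply]; positivity)
    have i1 := integral_congr_ae e1
    have i2 := integral_congr_ae e2
    have i3 := integral_congr_ae e3
    simp only [Pi.mul_apply] at h
    rw [i1, i2, i3] at h
    exact h
  have hQm : AEStronglyMeasurable (fun s => Q m s * s) μ :=
    ((Q_cont_aux m).mul continuous_id).aestronglyMeasurable
  have hQi := Q_int_aux m
  have hQe : Integrable (fun s => Q m s * s * ‖ε s‖) μ := by
    refine Integrable.mono' (hQi.add hG) (hQm.mul hnm) ?_
    filter_upwards [hpos] with r hr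
    have := Q_nonneg_aux m hr
    rw [Real.norm_of_nonneg (by positivity)]
    simp only [Pi.add_apply]
    nlinarith [sq_nonneg (Q m r * r - ‖ε r‖), sq_nonneg (Q m r * r + ‖ε r‖)]
  have hM : ∫ s, Q m s * s * ‖ε s‖ ∂μ ≤ Real.sqrt K * Real.sqrt G := by
    refine cs_aux hQm hnm hQi hG ?_ (Eventually.of_forall fun r => norm_nonneg _)
    filter_upwards [hpos] with r hr
    have := Q_nonneg_aux m hr
    simp only [Pi.zero_apply]; positivity
  have hM0 : 0 ≤ ∫ s, Q m s * s * ‖ε s‖ ∂μ := integral_nonneg_of_ae (by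
    filter_upwards [hpos] with r hr
    have := Q_nonneg_aux m hr
    simp only [Pi.zero_apply]; positivity)
  have hAb : ∀ r : ℝ, 0 < r → (2 * Atheta2 (fun s => (Q m s : ℂ)) ε r) ^ 2 ≤ K * G := by
    intro r hr
    have h1 : |2 * Atheta2 (fun s => (Q m s : ℂ)) ε r| ≤ ∫ s, Q m s * s * ‖ε s‖ ∂μ := by
      have e : 2 * Atheta2 (fun s => (Q m s : ℂ)) ε r =
          -∫ s in Ioc 0 r, ((starRingEnd ℂ) (Q m s : ℂ) * ε s).re * s := by
        unfold Atheta2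
        rw [intervalIntegral.integral_of_le hr.le]; ring
      rw [e, abs_neg, ← Real.norm_eq_abs]
      calc _ ≤ ∫ s in Ioc 0 r, Q m s * s * ‖ε s‖ := by
            refine norm_integral_le_of_norm_le
              (IntegrableOn.mono_set (t := Ioi 0) hQe Ioc_subset_Ioi_self) ?_
            filter_upwards [ae_restrict_mem measurableSet_Ioc] with s hs
            have hs0 : 0 < s := hs.1
            have hq := Q_nonneg_aux m hs0
            rw [Complex.conj_ofReal, Complex.re_ofReal_mul, Real.norm_eq_abs, abs_mul, abs_mul,
              abs_of_nonneg hq, abs_of_pos hs0]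
            have := Complex.abs_re_le_norm (ε s)
            calc _ = Q m s * s * |(ε s).re| := by ring
              _ ≤ _ := by gcongr
        _ ≤ _ := by
            refine setIntegral_mono_set (t := Ioi 0) hQe ?_ Ioc_subset_Ioi_self.eventuallyLE
            filter_upwards [hpos] with r hr
            have := Q_nonneg_aux m hr
            simp only [Pi.zero_apply]; positivity
    calc _ = |2 * Atheta2 (fun s => (Q m s : ℂ)) ε r| ^ 2 := (sq_abs _).symm
      _ ≤ (Real.sqrt K * Real.sqrt G) ^ 2 := by
        gcongr
        exact h1.trans hM
      _ = K * G := by rw [mul_pow, Real.sq_sqrt hK0, Real.sq_sqrt hG0]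
  have hmain : ∫ r, (2 * Atheta2 (fun s => (Q m s : ℂ)) ε r / r) ^ 2 * ‖ε r‖ ^ 2 * r ∂μ
      ≤ K * G * a := by
    rw [ha, ← integral_const_mul]
    refine integral_mono_of_nonneg ?_ (hA.const_mul _) ?_
    · filter_upwards [hpos] with r hr
      simp only [Pi.zero_apply]; positivity
    · filter_upwards [hpos] with r hr
      have := hAb r hr
      calc _ = (2 * Atheta2 (fun s => (Q m s : ℂ)) ε r) ^ 2 * (‖ε r‖ ^ 2 / r) := by
            field_simp
        _ ≤ _ := by gcongr
  have hpi : 1 ≤ 2 * Real.pi := by linarith [Real.pi_gt_three]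
  have haH : a ≤ H1msq m ε := by
    have h1 : a ≤ ∫ r, (‖deriv ε r‖ ^ 2 + (m : ℝ) ^ 2 * ‖ε r‖ ^ 2 / r ^ 2) * r ∂μ := by
      refine integral_mono_ae hA hH ?_
      filter_upwards [hpos] with r hr
      exact hptA r hr
    exact h1.trans (le_mul_of_one_le_left (ha0.trans h1) hpi)
  have hbL : b ≤ L2sq ε := le_mul_of_one_le_left hb0 hpi
  have hH0 : 0 ≤ H1msq m ε := ha0.trans haH
  set h := Real.sqrt (H1msq m ε) with hh
  set l := Real.sqrt (L2sq ε) with hl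
  have hh0 : 0 ≤ h := Real.sqrt_nonneg _
  have hl0 : 0 ≤ l := Real.sqrt_nonneg _
  have hah : a ≤ h ^ 2 := by rw [hh, Real.sq_sqrt hH0]; exact haH
  have hGhl : G ≤ h * l :=
    hGab.trans (mul_le_mul (Real.sqrt_le_sqrt haH) (Real.sqrt_le_sqrt hbL)
      (Real.sqrt_nonneg _) hh0)
  apply Real.sqrt_le_iff.2
  refine ⟨by positivity, ?_⟩
  have r1 : (h ^ ((3:ℝ) / 2)) ^ 2 = h ^ 3 := by
    rw [← Real.rpow_natCast, ← Real.rpow_mul hh0, ← Real.rpow_natCast]; norm_num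
  have r2 : (l ^ ((1:ℝ) / 2)) ^ 2 = l := by
    rw [← Real.rpow_natCast, ← Real.rpow_mul hl0]; norm_num
  rw [mul_pow, mul_pow, r1, r2, Real.sq_sqrt (by positivity)]
  calc _ ≤ 2 * Real.pi * (K * G * a) := by gcongr
    _ ≤ 2 * Real.pi * (K * (h * l) * h ^ 2) := by gcongr
    _ = _ := by ring
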